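/- First duplication relation for cyclotomic harmonic sums: let m ≥ 1, let a_1,…,a_m and c_1,…,c_m be positive integers, b_1,…,b_m nonnegative integers, and n ∈ ℕ. Then Σ_{(σ_1,…,σ_m) ∈ {−1,1}^m} S_{(a_1,b_1,σ_1 c_1),…,(a_m,b_m,σ_m c_m)}(2n) = 2^m · S_{(2a_1,b_1,c_1),…,(2a_m,b_m,c_m)}(n), where the sum on the left runs over all 2^m choices of signs σ_i ∈ {−1,1}. -/

import Mathlib

/-- Cyclotomic harmonic sums: `cycH [(a₁,b₁,c₁),…] n` is `S_{(a₁,b₁,c₁),…}(n)`;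
the empty sum equals `1`. -/
noncomputable def cycH : List (ℕ × ℤ × ℤ) → ℕ → ℝ
  | [], _ => 1
  | (a, b, c) :: t, n =>
      ∑ i ∈ Finset.Icc 1 n,
        ((c.sign : ℝ)) ^ i / ((a : ℝ) * i + (b : ℝ)) ^ c.natAbs * cycH t i

/-!
A nested sum is multilinear in its summands, so summing over all signs replaces the `i`-th summand
by its sum over the two signs `±cᵢ`. As `1 ^ j + (-1) ^ j` is `0` for odd `j` and `2` for even `j`,
only even summation indices survive, and the substitution `j ↦ 2 * j` turns the `i`-th summand into
twice the one attached to `(2 * aᵢ, bᵢ, cᵢ)`.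
-/

section NestedSum

variable {R : Type*}

/-- The nested sum `∑ f₁(i₁) f₂(i₂) ⋯ f_k(i_k)` over `n ≥ i₁ ≥ i₂ ≥ ⋯ ≥ i_k ≥ 1`, of which the
cyclotomic harmonic sums are the case of particular summands. It is defined by recursion on the
list of summands, the outermost one first. -/
def nestedSum [Semiring R] : List (ℕ → R) → ℕ → R
  | [], _ => 1
  | f :: l, n => ∑ i ∈ Finset.Icc 1 n, f i * nestedSum l i

theorem nestedSum_ofFn_sum [Semiring R] {k : ℕ} {ι : Fin k → Type*} [∀ i, Fintype (ι i)]
    (f : ∀ i, ι i → ℕ → R) (n : ℕ) :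
    nestedSum (List.ofFn fun i ↦ ∑ s, f i s) n =
      ∑ σ : ∀ i, ι i, nestedSum (List.ofFn fun i ↦ f i (σ i)) n := by
  induction k generalizing n with
  | zero => simp [nestedSum]
  | succ k ih =>
    rw [← (Fin.consEquiv ι).sum_comp, Fintype.sum_prod_type]
    simp only [List.ofFn_succ, nestedSum, Fin.consEquiv_apply, Fin.cons_zero, Fin.cons_succ]
    calc
      _ = ∑ j ∈ Finset.Icc 1 n, ∑ s, ∑ τ : ∀ i : Fin k, ι i.succ,
            f 0 s j * nestedSum (List.ofFn fun i ↦ f i.succ (τ i)) j := by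
        simp only [ih, Finset.sum_apply, Finset.sum_mul_sum]
      _ = _ := by
        rw [Finset.sum_comm]
        exact Finset.sum_congr rfl fun s _ ↦ Finset.sum_comm

theorem nestedSum_map_smul [CommSemiring R] (r : R) (l : List (ℕ → R)) (n : ℕ) :
    nestedSum (l.map (r • ·)) n = r ^ l.length * nestedSum l n := by
  induction l generalizing n with
  | nil => simp [nestedSum]
  | cons f l ih =>
    simp only [List.map_cons, nestedSum, ih, List.length_cons, Finset.mul_sum, Pi.smul_apply,
      smul_eq_mul]
    exact Finset.sum_congr rfl fun j _ ↦ by ring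

theorem sum_Icc_one_mul_of_forall_not_dvd {M : Type*} [AddCommMonoid M] {d : ℕ} (hd : 0 < d)
    {f : ℕ → M} (hf : ∀ i, ¬d ∣ i → f i = 0) (n : ℕ) :
    ∑ i ∈ Finset.Icc 1 (d * n), f i = ∑ j ∈ Finset.Icc 1 n, f (d * j) := by
  refine (Finset.sum_of_injOn (d * ·) (mul_right_injective₀ hd.ne').injOn ?_ ?_
    fun _ _ ↦ rfl).symm
  · intro j hj
    obtain ⟨hj₁, hjn⟩ := Finset.mem_Icc.mp hj
    exact Finset.mem_Icc.mpr ⟨Nat.mul_pos hd hj₁, Nat.mul_le_mul_left d hjn⟩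
  · intro i hi hi_image
    refine hf i ?_
    rintro ⟨j, rfl⟩
    obtain ⟨hj₁, hjn⟩ := Finset.mem_Icc.mp hi
    exact hi_image ⟨j, Finset.mem_Icc.mpr
      ⟨Nat.pos_of_mul_pos_left hj₁, Nat.le_of_mul_le_mul_left hjn hd⟩, rfl⟩

theorem nestedSum_mul_of_forall_not_dvd [Semiring R] {d : ℕ} (hd : 0 < d) {l : List (ℕ → R)}
    (hl : ∀ f ∈ l, ∀ i, ¬d ∣ i → f i = 0) (n : ℕ) :
    nestedSum l (d * n) = nestedSum (l.map fun f j ↦ f (d * j)) n := by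
  induction l generalizing n with
  | nil => rfl
  | cons f l ih =>
    obtain ⟨hf, hl⟩ := List.forall_mem_cons.mp hl
    simp only [nestedSum, List.map_cons]
    rw [sum_Icc_one_mul_of_forall_not_dvd hd fun i hi ↦ by rw [hf i hi, zero_mul]]
    exact Finset.sum_congr rfl fun j _ ↦ by rw [ih hl]

end NestedSum

/-- The summand `sgn(c)^i / (a i + b)^|c|` that an index triple `(a, b, c)` contributes to a
cyclotomic harmonic sum. -/
noncomputable def cycTerm : ℕ × ℤ × ℤ → ℕ → ℝ
  | (a, b, c), i => (c.sign : ℝ) ^ i / ((a : ℝ) * i + b) ^ c.natAbs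

theorem cycH_eq_nestedSum (l : List (ℕ × ℤ × ℤ)) (n : ℕ) :
    cycH l n = nestedSum (l.map cycTerm) n := by
  induction l generalizing n with
  | nil => rfl
  | cons t l ih => simp only [cycH, List.map_cons, nestedSum, cycTerm, ih]

theorem cycTerm_neg (a : ℕ) (b c : ℤ) (i : ℕ) :
    cycTerm (a, b, -c) i = (-1) ^ i * cycTerm (a, b, c) i := by
  simp only [cycTerm, Int.sign_neg, Int.natAbs_neg, Int.cast_neg, neg_pow (c.sign : ℝ) i,
    mul_div_assoc]

theorem cycTerm_two_mul (a : ℕ) (b : ℤ) {c : ℤ} (hc : 0 < c) (j : ℕ) :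
    cycTerm (a, b, c) (2 * j) = cycTerm (2 * a, b, c) j := by
  simp only [cycTerm, Int.sign_eq_one_of_pos hc, Int.cast_one, one_pow, Nat.cast_mul,
    mul_left_comm (a : ℝ), mul_assoc]

theorem sum_sign_cycTerm (a : ℕ) (b c : ℤ) (i : ℕ) :
    ∑ s : Bool, cycTerm (a, b, (if s then 1 else -1) * c) i =
      (1 + (-1) ^ i) * cycTerm (a, b, c) i := by
  simp [cycTerm_neg, add_mul]

theorem cycH_duplication_first_general {k : ℕ} (a : Fin k → ℕ) (b c : Fin k → ℤ) (n : ℕ)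
    (_hab : ∀ i, 0 < a i + b i) (hc : ∀ i, 0 < c i) :
    ∑ σ : Fin k → Bool,
        cycH (List.ofFn fun i ↦ (a i, b i, (if σ i then 1 else -1) * c i)) (2 * n) =
      2 ^ k * cycH (List.ofFn fun i ↦ (2 * a i, b i, c i)) n := by
  let f (i : Fin k) (s : Bool) : ℕ → ℝ := cycTerm (a i, b i, (if s then 1 else -1) * c i)
  let g (i : Fin k) : ℕ → ℝ := cycTerm (2 * a i, b i, c i)
  have sum_f_odd (i : Fin k) (j : ℕ) (hj : ¬2 ∣ j) : (∑ s, f i s) j = 0 := by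
    have hj_odd : Odd j := by rwa [← Nat.not_even_iff_odd, even_iff_two_dvd]
    rw [Finset.sum_apply, sum_sign_cycTerm, hj_odd.neg_one_pow, add_neg_cancel, zero_mul]
  have sum_f_even (i : Fin k) : (fun j ↦ (∑ s, f i s) (2 * j)) = (2 : ℝ) • g i := by
    ext j
    rw [Finset.sum_apply, sum_sign_cycTerm, (even_two_mul j).neg_one_pow, one_add_one_eq_two,
      cycTerm_two_mul _ _ (hc i), Pi.smul_apply, smul_eq_mul]
  simp only [cycH_eq_nestedSum, List.map_ofFn, Function.comp_def]
  calc
    ∑ σ : Fin k → Bool, nestedSum (List.ofFn fun i ↦ f i (σ i)) (2 * n)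
    _ = nestedSum (List.ofFn fun i ↦ ∑ s, f i s) (2 * n) := (nestedSum_ofFn_sum f _).symm
    _ = nestedSum ((List.ofFn g).map ((2 : ℝ) • ·)) n := by
      rw [nestedSum_mul_of_forall_not_dvd two_pos (List.forall_mem_ofFn_iff.mpr sum_f_odd)]
      simp only [List.map_ofFn]
      exact congrArg (fun h ↦ nestedSum (List.ofFn h) n) (funext sum_f_even)
    _ = 2 ^ k * nestedSum (List.ofFn g) n := by rw [nestedSum_map_smul, List.length_ofFn]

/-- First duplication relation for cyclotomic harmonic sums:
the sum over all `2^(m+1)` sign choices of `S_{(aᵢ,bᵢ,±cᵢ)}(2n)` equals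
`2^(m+1) · S_{(2aᵢ,bᵢ,cᵢ)}(n)`. -/
theorem cycH_duplication_first (m : ℕ) (a c b : Fin (m + 1) → ℕ) (n : ℕ)
    (ha : ∀ i, 0 < a i) (hc : ∀ i, 0 < c i) :
    ∑ σ : Fin (m + 1) → Bool,
        cycH (List.ofFn fun i =>
          (a i, (b i : ℤ), (if σ i then 1 else -1) * (c i : ℤ))) (2 * n) =
      (2 : ℝ) ^ (m + 1) *
        cycH (List.ofFn fun i => (2 * a i, (b i : ℤ), (c i : ℤ))) n :=
  cycH_duplication_first_general a (fun i ↦ b i) (fun i ↦ c i) n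
    (fun i ↦ by have := ha i; positivity) (fun i ↦ Int.natCast_pos.mpr (hc i))
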